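/- arXiv:1411.6963 — 2 statements merged into one kernel-verified Lean document; each statement's English description precedes it below -/
import Mathlib

section
/- For an integer b ≥ 2, the quadratic form f^{2,b}_1(x,y,z,w) = 2·x² + b·y² + (z² + z·w + w²) represents every nonnegative integer (with x, y, z, w ∈ ℤ) if and only if b ∈ {2, 3, 4, 5, 6, 7, 8, 9, 10}. -/
/-!
The ternary form `2x² + z² + zw + w²` misses exactly the numbers `4ᵏ (16m + 10)`. It misses `10`,
which forces `b ≤ 10`; conversely, for `2 ≤ b ≤ 10`, subtracting `b y²` with a small `y` leaves this
exceptional class. The ternary form is `1/6` times the sum of three squares restricted to the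
lattice of integral vectors spanned by `(2, 2, 2)`, `(1, 1, -2)` and `(2, -1, -1)`, and up to signs
this lattice contains every integral vector whose norm is a multiple of `6`.

Three squares are obtained by Dirichlet's argument: Dirichlet's theorem on primes and quadratic
reciprocity put `n` on the diagonal of a positive definite integral ternary form of determinant `1`.
By Hermite's inequality a positive definite form in `r` variables of determinant `1` takes a
positive value at most `(4/3) ^ ((r - 1) / 2)`, which is less than `2` for `r ≤ 5`. So the value is
`1`, a square splits off, and by induction the form is a sum of squares of linear forms.
-/

open Matrix
open scoped NumberTheorySymbols

/-! ### Condensation of matrices -/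

section Condensation

variable {R : Type*} [CommRing R] {n : ℕ}

/-- The condensation `(a₀₀ aᵢⱼ - aᵢ₀ a₀ⱼ)` of a square matrix at its upper left entry. For a
symmetric matrix it is the form left over when `a₀₀` times the quadratic form of `A` is completed
to a square in the first variable. -/
def condensation (A : Matrix (Fin (n + 1)) (Fin (n + 1)) R) : Matrix (Fin n) (Fin n) R :=
  .of fun i j => A 0 0 * A i.succ j.succ - A i.succ 0 * A 0 j.succ

/-- The matrix with rows `(a, r)` and `(0, V)`, used both for eliminating the first column and for
extending a change of variables by one variable. -/
def bordered (a : R) (r : Fin n → R) (V : Matrix (Fin n) (Fin n) R) :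
    Matrix (Fin (n + 1)) (Fin (n + 1)) R :=
  .of (Fin.cons (Fin.cons a r) fun i => Fin.cons 0 (V i))

lemma det_bordered (a : R) (r : Fin n → R) (V : Matrix (Fin n) (Fin n) R) :
    (bordered a r V).det = a * V.det := by
  have minor_eq : (bordered a r V).submatrix (Fin.succAbove 0) Fin.succ = V := rfl
  rw [det_succ_column_zero, Fin.sum_univ_succ, minor_eq]
  simp [bordered]

lemma mul_det_condensation (A : Matrix (Fin (n + 1)) (Fin (n + 1)) R) :
    A 0 0 * (condensation A).det = A 0 0 ^ n * A.det := by
  let scale : Fin (n + 1) → R := Fin.cons 1 fun _ => A 0 0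
  have det_scaled : (of fun i j => scale i * A i j).det = A 0 0 ^ n * A.det := by
    rw [det_mul_column, Fin.prod_univ_succ]
    simp [scale]
  rw [← det_bordered (A 0 0) (Fin.tail (A 0)), ← det_scaled]
  refine det_eq_of_forall_row_eq_smul_add_const (Fin.cons 0 fun i => -A i.succ 0) 0 rfl ?_
  intro i j
  cases i using Fin.cases <;> cases j using Fin.cases <;>
    simp [bordered, scale, condensation, sub_eq_add_neg, mul_comm (A 0 0)]

lemma mul_dotProduct_mulVec_eq_add_condensation (A : Matrix (Fin (n + 1)) (Fin (n + 1)) R)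
    (u v : Fin (n + 1) → R) :
    A 0 0 * (u ⬝ᵥ A *ᵥ v) =
      (u ⬝ᵥ A.col 0) * (A.row 0 ⬝ᵥ v) + Fin.tail u ⬝ᵥ condensation A *ᵥ Fin.tail v := by
  let padded := bordered 0 0 (condensation A)
  have smul_eq : A 0 0 • A = vecMulVec (A.col 0) (A.row 0) + padded := by
    ext i j
    cases i using Fin.cases <;> cases j using Fin.cases <;>
      simp [padded, bordered, condensation, vecMulVec_apply, mul_comm]
  have padded_eq : u ⬝ᵥ padded *ᵥ v = Fin.tail u ⬝ᵥ condensation A *ᵥ Fin.tail v := by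
    simp [padded, bordered, dotProduct, mulVec, Fin.sum_univ_succ, Fin.tail]
  calc A 0 0 * (u ⬝ᵥ A *ᵥ v) = u ⬝ᵥ (A 0 0 • A) *ᵥ v := by
        rw [smul_mulVec, dotProduct_smul, smul_eq_mul]
    _ = (u ⬝ᵥ A.col 0) * (A.row 0 ⬝ᵥ v) + u ⬝ᵥ padded *ᵥ v := by
        rw [smul_eq, add_mulVec, dotProduct_add, vecMulVec_mulVec, dotProduct_smul,
          MulOpposite.smul_eq_mul_unop, MulOpposite.unop_op]
    _ = _ := by rw [padded_eq]

lemma mul_dotProduct_mulVec_self_eq {A : Matrix (Fin (n + 1)) (Fin (n + 1)) R} (hA : A.IsSymm)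
    (v : Fin (n + 1) → R) :
    A 0 0 * (v ⬝ᵥ A *ᵥ v) =
      (A.row 0 ⬝ᵥ v) ^ 2 + Fin.tail v ⬝ᵥ condensation A *ᵥ Fin.tail v := by
  have col_eq_row : A.col 0 = A.row 0 := funext fun i => hA.apply 0 i
  rw [mul_dotProduct_mulVec_eq_add_condensation, col_eq_row, dotProduct_comm v, sq]

lemma isSymm_condensation {A : Matrix (Fin (n + 1)) (Fin (n + 1)) R} (hA : A.IsSymm) :
    (condensation A).IsSymm :=
  IsSymm.ext fun i j => by simp [condensation, hA.apply, mul_comm]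

lemma exists_isUnit_col_zero_eq_cons {V : Matrix (Fin (n + 1)) (Fin (n + 1)) R} (hV : IsUnit V)
    (t : R) : ∃ U : Matrix (Fin (n + 2)) (Fin (n + 2)) R,
      IsUnit U ∧ U.col 0 = Fin.cons t (V.col 0) := by
  refine ⟨(bordered 1 (fun _ => t) V).submatrix id (Equiv.swap 0 1), ?_, ?_⟩
  · rw [isUnit_iff_isUnit_det] at hV ⊢
    rw [det_permute', det_bordered, one_mul]
    simpa using hV
  · ext i
    cases i using Fin.cases <;> simp [bordered]

lemma transpose_mul_self_bordered {B : Matrix (Fin (n + 1)) (Fin (n + 1)) R} (hB : B.IsSymm)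
    (pivot : B 0 0 = 1) {V : Matrix (Fin n) (Fin n) R} (hV : condensation B = Vᵀ * V) :
    (bordered 1 (Fin.tail (B 0)) V)ᵀ * bordered 1 (Fin.tail (B 0)) V = B := by
  ext i j
  cases i using Fin.cases with
  | zero =>
    cases j using Fin.cases <;>
      simp [bordered, mul_apply, Fin.sum_univ_succ, Fin.tail, pivot]
  | succ i =>
    cases j using Fin.cases with
    | zero => simp [bordered, mul_apply, Fin.sum_univ_succ, Fin.tail, hB.apply]
    | succ j =>
      have h := congrFun₂ hV i j
      simp only [condensation, pivot, mul_apply, of_apply, transpose_apply, hB.apply] at h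
      simp [bordered, mul_apply, Fin.sum_univ_succ, Fin.tail, ← h, hB.apply]

end Condensation

section PosDef

variable {R : Type*} [CommRing R] [LinearOrder R] [IsStrictOrderedRing R] [StarRing R]
  [TrivialStar R] {n : ℕ} {A : Matrix (Fin (n + 1)) (Fin (n + 1)) R}

lemma posDef_condensation (hA : A.PosDef) : (condensation A).PosDef := by
  have hsymm := isHermitian_iff_isSymm.1 hA.isHermitian
  have hsymmC := isHermitian_iff_isSymm.2 (isSymm_condensation hsymm)
  refine .of_dotProduct_mulVec_pos hsymmC fun w hw => ?_
  -- the vector over `A 0 0 • w` on which the linear form `A 0` vanishes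
  let v : Fin (n + 1) → R := Fin.cons (-(Fin.tail (A.row 0) ⬝ᵥ w)) (A 0 0 • w)
  have row_dotProduct : A.row 0 ⬝ᵥ v = 0 := by
    rw [dotProduct, Fin.sum_univ_succ]
    simp only [v, Fin.cons_zero, Fin.cons_succ, dotProduct, Fin.tail, Pi.smul_apply, smul_eq_mul,
      mul_left_comm _ (A 0 0), ← Finset.mul_sum, row_apply]
    ring
  have v_ne_zero : v ≠ 0 := fun h => hw <| by
    have tail_eq : A 0 0 • w = 0 := funext fun i => congrFun h i.succ
    exact (smul_eq_zero_iff_right hA.diag_pos.ne').1 tail_eq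
  have complete_square := mul_dotProduct_mulVec_self_eq hsymm v
  have tail_v : Fin.tail v = A 0 0 • w := rfl
  have pos := mul_pos (hA.diag_pos (i := 0)) (hA.dotProduct_mulVec_pos v_ne_zero)
  rw [star_trivial, complete_square, row_dotProduct, tail_v, mulVec_smul, dotProduct_smul,
    smul_dotProduct, smul_eq_mul, smul_eq_mul, zero_pow two_ne_zero, zero_add] at pos
  rw [star_trivial]
  exact pos_of_mul_pos_right (pos_of_mul_pos_right pos hA.diag_pos.le) hA.diag_pos.le

lemma posDef_of_condensation (hA : A.IsSymm) (pivot : 0 < A 0 0)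
    (hC : (condensation A).PosDef) : A.PosDef := by
  refine .of_dotProduct_mulVec_pos (isHermitian_iff_isSymm.2 hA) fun v hv => ?_
  rw [star_trivial]
  refine pos_of_mul_pos_right (a := A 0 0) ?_ pivot.le
  rw [mul_dotProduct_mulVec_self_eq hA]
  by_cases tail_eq : Fin.tail v = 0
  · have head_ne : v 0 ≠ 0 := fun h => hv <| by
      rw [← Fin.cons_self_tail v, tail_eq, h]
      exact Matrix.cons_zero_zero
    have : A.row 0 ⬝ᵥ v = A 0 0 * v 0 := by
      rw [← Fin.cons_self_tail v, tail_eq, dotProduct, Fin.sum_univ_succ]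
      simp
    rw [tail_eq, zero_dotProduct, add_zero, this]
    positivity
  · have := hC.dotProduct_mulVec_pos tail_eq
    rw [star_trivial] at this
    positivity

end PosDef

/-! ### Hermite reduction -/

lemma posDef_transpose_mul_mul {R ι : Type*} [CommRing R] [PartialOrder R] [StarRing R]
    [TrivialStar R] [Fintype ι] [DecidableEq ι] {A U : Matrix ι ι R} (hA : A.PosDef)
    (hU : IsUnit U) : (Uᵀ * A * U).PosDef := by
  rw [← conjTranspose_eq_transpose_of_trivial, ← star_eq_conjTranspose]
  exact hU.posDef_star_left_conjugate_iff.2 hA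

lemma det_transpose_mul_mul {ι : Type*} [Fintype ι] [DecidableEq ι] {A U : Matrix ι ι ℤ}
    (hU : IsUnit U) : (Uᵀ * A * U).det = A.det := by
  have sq_det : U.det ^ 2 = 1 := Int.isUnit_sq ((isUnit_iff_isUnit_det U).1 hU)
  rw [det_mul, det_mul, det_transpose]
  linear_combination A.det * sq_det

lemma exists_sq_two_mul_add_mul_le {a : ℤ} (ha : 0 < a) (b : ℤ) :
    ∃ t : ℤ, (2 * (b + a * t)) ^ 2 ≤ a ^ 2 := by
  lift a to ℕ using ha.le
  refine ⟨-b.bdiv a, ?_⟩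
  have bmod_eq : b + a * -b.bdiv a = b.bmod a := by
    rw [Int.bmod_eq_self_sub_mul_bdiv]; ring
  have lower := Int.le_bmod (x := b) (m := a) (by omega)
  have upper := Int.bmod_le (x := b) (m := a) (by omega)
  rw [bmod_eq]
  exact sq_le_sq' (by omega) (by omega)

lemma exists_forall_le_transpose_mul_mul {n : ℕ} {A : Matrix (Fin (n + 1)) (Fin (n + 1)) ℤ}
    (hA : A.PosDef) : ∃ U : Matrix (Fin (n + 1)) (Fin (n + 1)) ℤ, IsUnit U ∧
      ∀ V : Matrix (Fin (n + 1)) (Fin (n + 1)) ℤ, IsUnit V →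
        (Uᵀ * A * U) 0 0 ≤ (Vᵀ * A * V) 0 0 := by
  obtain ⟨_, ⟨U, hU, rfl⟩, least⟩ := Int.exists_least_of_bdd
    (P := fun a => ∃ U : Matrix (Fin (n + 1)) (Fin (n + 1)) ℤ, IsUnit U ∧ (Uᵀ * A * U) 0 0 = a)
    ⟨0, by rintro _ ⟨U, hU, rfl⟩; exact (posDef_transpose_mul_mul hA hU).diag_pos.le⟩
    ⟨_, 1, isUnit_one, rfl⟩
  exact ⟨U, hU, fun V hV => least _ ⟨V, hV, rfl⟩⟩

lemma three_mul_sq_le_condensation_of_forall_le {n : ℕ} {A : Matrix (Fin (n + 2)) (Fin (n + 2)) ℤ}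
    (hA : A.PosDef)
    (hmin : ∀ U : Matrix (Fin (n + 2)) (Fin (n + 2)) ℤ, IsUnit U → A 0 0 ≤ (Uᵀ * A * U) 0 0)
    {V : Matrix (Fin (n + 1)) (Fin (n + 1)) ℤ} (hV : IsUnit V) :
    3 * A 0 0 ^ 2 ≤ 4 * (Vᵀ * condensation A * V) 0 0 := by
  obtain ⟨t, ht⟩ := exists_sq_two_mul_add_mul_le (hA.diag_pos (i := 0))
    (Fin.tail (A.row 0) ⬝ᵥ V.col 0)
  obtain ⟨U, hU, hcol⟩ := exists_isUnit_col_zero_eq_cons hV t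
  have row_dotProduct : A.row 0 ⬝ᵥ U.col 0 = Fin.tail (A.row 0) ⬝ᵥ V.col 0 + A 0 0 * t := by
    rw [hcol, dotProduct, Fin.sum_univ_succ, add_comm]
    rfl
  have complete_square : A 0 0 * (Uᵀ * A * U) 0 0 =
      (A.row 0 ⬝ᵥ U.col 0) ^ 2 + (Vᵀ * condensation A * V) 0 0 := by
    have tail_col : Fin.tail (U.col 0) = V.col 0 := by rw [hcol, Fin.tail_cons]
    have := mul_dotProduct_mulVec_self_eq (isHermitian_iff_isSymm.1 hA.isHermitian) (U.col 0)
    rw [tail_col] at this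
    rwa [mul_mul_apply, mul_mul_apply]
  have := mul_le_mul_of_nonneg_left (hmin U hU) (hA.diag_pos (i := 0)).le
  rw [complete_square, row_dotProduct] at this
  linarith

theorem exists_hermite_inequality {n : ℕ} {A : Matrix (Fin (n + 1)) (Fin (n + 1)) ℤ}
    (hA : A.PosDef) :
    ∃ U : Matrix (Fin (n + 1)) (Fin (n + 1)) ℤ, IsUnit U ∧
      3 ^ (n + 1).choose 2 * (Uᵀ * A * U) 0 0 ^ (n + 1) ≤ 4 ^ (n + 1).choose 2 * A.det := by
  induction n with
  | zero => exact ⟨1, isUnit_one, by simp⟩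
  | succ n ih =>
    obtain ⟨U, hU, hmin⟩ := exists_forall_le_transpose_mul_mul hA
    refine ⟨U, hU, ?_⟩
    rw [← det_transpose_mul_mul (A := A) hU]
    have hB := posDef_transpose_mul_mul hA hU
    set B := Uᵀ * A * U with B_def
    have hminB : ∀ V : Matrix (Fin (n + 2)) (Fin (n + 2)) ℤ, IsUnit V →
        B 0 0 ≤ (Vᵀ * B * V) 0 0 := fun V hV => by
      simpa [B_def, mul_assoc] using hmin (U * V) (hU.mul hV)
    obtain ⟨V, hV, bound⟩ := ih (posDef_condensation hB)
    have hBV := three_mul_sq_le_condensation_of_forall_le hB hminB hV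
    have hdet := mul_det_condensation B
    set a := B 0 0
    set m := (Vᵀ * condensation B * V) 0 0
    set k := (n + 1).choose 2
    have ha : 0 < a := hB.diag_pos
    have choose_eq : (n + 2).choose 2 = (n + 1) + k := by
      rw [Nat.choose_succ_succ' (n + 1) 1, Nat.choose_one_right]
    rw [choose_eq]
    refine le_of_mul_le_mul_left ?_ (pow_pos ha (n + 1))
    calc a ^ (n + 1) * (3 ^ (n + 1 + k) * a ^ (n + 2))
        = a * (3 ^ k * (3 * a ^ 2) ^ (n + 1)) := by ring
      _ ≤ a * (3 ^ k * (4 * m) ^ (n + 1)) := by gcongr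
      _ = a * 4 ^ (n + 1) * (3 ^ k * m ^ (n + 1)) := by ring
      _ ≤ a * 4 ^ (n + 1) * (4 ^ k * (condensation B).det) := by gcongr
      _ = 4 ^ (n + 1 + k) * (a * (condensation B).det) := by ring
      _ = a ^ (n + 1) * (4 ^ (n + 1 + k) * B.det) := by rw [hdet]; ring

lemma exists_transpose_mul_mul_apply_zero_zero_eq_one {n : ℕ} (hn : n ≤ 4)
    {A : Matrix (Fin (n + 1)) (Fin (n + 1)) ℤ} (hA : A.PosDef) (hdet : A.det = 1) :
    ∃ U : Matrix (Fin (n + 1)) (Fin (n + 1)) ℤ, IsUnit U ∧ (Uᵀ * A * U) 0 0 = 1 := by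
  obtain ⟨U, hU, bound⟩ := exists_hermite_inequality hA
  have pos : 0 < (Uᵀ * A * U) 0 0 := (posDef_transpose_mul_mul hA hU).diag_pos
  refine ⟨U, hU, ?_⟩
  by_contra hne
  have two_le : 2 ≤ (Uᵀ * A * U) 0 0 := by omega
  have : 3 ^ (n + 1).choose 2 * 2 ^ (n + 1) ≤ (4 : ℤ) ^ (n + 1).choose 2 :=
    calc 3 ^ (n + 1).choose 2 * (2 : ℤ) ^ (n + 1)
        ≤ 3 ^ (n + 1).choose 2 * (Uᵀ * A * U) 0 0 ^ (n + 1) := by gcongr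
      _ ≤ _ := by simpa [hdet] using bound
  interval_cases n <;> simp [Nat.choose] at this

theorem exists_eq_transpose_mul_self {n : ℕ} (hn : n ≤ 5) {A : Matrix (Fin n) (Fin n) ℤ}
    (hA : A.PosDef) (hdet : A.det = 1) : ∃ W : Matrix (Fin n) (Fin n) ℤ, A = Wᵀ * W := by
  induction n with
  | zero => exact ⟨1, Subsingleton.elim _ _⟩
  | succ n ih =>
    obtain ⟨U, hU, pivot⟩ := exists_transpose_mul_mul_apply_zero_zero_eq_one (by omega) hA hdet
    have hB := posDef_transpose_mul_mul hA hU
    set B := Uᵀ * A * U with B_def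
    have detC : (condensation B).det = 1 := by
      have := mul_det_condensation B
      rwa [pivot, one_pow, one_mul, one_mul, det_transpose_mul_mul hU, hdet] at this
    obtain ⟨V, hV⟩ := ih (by omega) (posDef_condensation hB) detC
    obtain ⟨U', hU'⟩ := hU.exists_right_inv
    refine ⟨bordered 1 (Fin.tail (B 0)) V * U', ?_⟩
    calc A = (U * U')ᵀ * A * (U * U') := by simp [hU']
      _ = U'ᵀ * B * U' := by simp [B_def, mul_assoc]
      _ = U'ᵀ * ((bordered 1 (Fin.tail (B 0)) V)ᵀ * bordered 1 (Fin.tail (B 0)) V) * U' := by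
        rw [transpose_mul_self_bordered (isHermitian_iff_isSymm.1 hB.isHermitian) pivot hV]
      _ = _ := by simp [mul_assoc]

/-! ### Sums of three squares -/

lemma exists_sum_three_sq_of_mul_sub_one_dvd {n d k : ℤ} (hn : 0 < n) (hd : 0 < d)
    (h : d * n - 1 ∣ k ^ 2 + d) : ∃ a b c : ℤ, n = a ^ 2 + b ^ 2 + c ^ 2 := by
  obtain ⟨m, hm⟩ := h
  have hm0 : 0 < m := by
    by_contra! hm'
    have := mul_pos hd hn
    nlinarith [sq_nonneg k]
  let A : Matrix (Fin 3) (Fin 3) ℤ := !![m, k, 1; k, d * n - 1, 0; 1, 0, n]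
  have hdet : A.det = 1 := by
    simp only [A, det_fin_three, of_apply, cons_val, cons_val_zero, cons_val_one]
    linear_combination (-n) * hm
  have hA : A.PosDef := by
    have condensation_eq : condensation A = !![d, -k; -k, m * n - 1] := by
      ext i j
      fin_cases i <;> fin_cases j <;> simp [A, condensation, mul_comm m, ← hm, sq]
    have condensation_condensation_eq : condensation (condensation A) = diagonal fun _ => m := by
      ext i j
      rw [condensation_eq]
      obtain rfl := Subsingleton.elim i 0
      obtain rfl := Subsingleton.elim j 0
      simp only [condensation, of_apply, cons_val, Fin.succ_zero_eq_one, diagonal_apply_eq]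
      linear_combination -hm
    have symm : A.IsSymm := by ext i j; fin_cases i <;> fin_cases j <;> rfl
    refine posDef_of_condensation symm hm0 ?_
    refine posDef_of_condensation (isSymm_condensation symm) (by simpa [condensation_eq]) ?_
    rw [condensation_condensation_eq]
    exact PosDef.diagonal fun _ => hm0
  obtain ⟨W, hW⟩ := exists_eq_transpose_mul_self (by norm_num) hA hdet
  refine ⟨W 0 2, W 1 2, W 2 2, ?_⟩
  calc n = (Wᵀ * W) 2 2 := by rw [← hW]; simp [A]
    _ = _ := by simp [mul_apply, Fin.sum_univ_three, sq]

lemma jacobiSym_neg_left_eq_swap {a b : ℕ} (ha : Odd a) (hb : Odd b) (h : b % 4 = 1 ∨ a % 4 = 3) :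
    J(-a | b) = J(b | a) := by
  rw [jacobiSym.neg _ hb]
  rcases (by grind : b % 4 = 1 ∨ a % 4 = 3 ∧ b % 4 = 3) with hb4 | ⟨ha4, hb4⟩
  · rw [ZMod.χ₄_nat_one_mod_four hb4, one_mul, jacobiSym.quadratic_reciprocity_one_mod_four' ha hb4]
  · rw [ZMod.χ₄_nat_three_mod_four hb4, jacobiSym.quadratic_reciprocity_three_mod_four ha4 hb4,
      neg_one_mul, neg_neg]

lemma jacobiSym_eq_of_dvd_mul_add_one {d : ℕ} {e p : ℤ} (h : (d : ℤ) ∣ e * p + 1) :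
    J(p | d) = J(-e | d) := by
  have coprime : p.gcd d = 1 := by
    obtain ⟨n, hn⟩ := h
    exact Int.isCoprime_iff_gcd_eq_one.1 ⟨-e, n, by linear_combination -hn⟩
  have modEq : -e * p ^ 2 ≡ p [ZMOD d] :=
    Int.modEq_iff_dvd.2 <| (h.mul_right p).trans (dvd_of_eq (by ring))
  rw [← jacobiSym.mod_left' modEq, jacobiSym.mul_left, jacobiSym.sq_one' coprime, mul_one]

lemma exists_dvd_sq_add_of_jacobiSym_neg_eq_one {p : ℕ} [Fact p.Prime] {d : ℤ}
    (h : J(-d | p) = 1) : ∃ k : ℤ, (p : ℤ) ∣ k ^ 2 + d := by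
  obtain ⟨y, hy⟩ := ZMod.isSquare_of_jacobiSym_eq_one h
  obtain ⟨k, rfl⟩ := ZMod.intCast_surjective y
  refine ⟨k, (ZMod.intCast_zmod_eq_zero_iff_dvd _ p).1 ?_⟩
  push_cast at hy ⊢
  linear_combination -hy

lemma exists_two_mul_dvd_sq_add {p d k : ℤ} (hp : Odd p) (hd : Odd d) (h : p ∣ k ^ 2 + d) :
    ∃ k' : ℤ, 2 * p ∣ k' ^ 2 + d := by
  obtain ⟨k', hk', odd⟩ : ∃ k', p ∣ k' ^ 2 + d ∧ Odd k' := by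
    rcases Int.even_or_odd k with even | odd
    · refine ⟨k + p, ?_, even.add_odd hp⟩
      rw [show (k + p) ^ 2 + d = k ^ 2 + d + p * (2 * k + p) by ring]
      exact h.add (dvd_mul_right p _)
    · exact ⟨k, h, odd⟩
  exact ⟨k', (Int.isCoprime_two_left.2 hp).mul_dvd
    (odd.pow.add_odd hd).two_dvd hk'⟩

lemma exists_prime_mul_add_one_eq {e g c n : ℕ} (hg : Odd g) (hn : n ≠ 0) (h : e * g + 1 = c * n) :
    ∃ p d : ℕ, p.Prime ∧ p ≡ g [MOD 4] ∧ d ≡ c [MOD 4 * e] ∧ e * p + 1 = d * n := by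
  have coprime : g.Coprime (4 * n) := by
    refine Nat.Coprime.mul_right (Nat.Coprime.pow_right 2 (Nat.coprime_two_right.2 hg)) ?_
    refine Nat.isCoprime_iff_coprime.1 ⟨-e, c, ?_⟩
    zify at h
    linear_combination -h
  obtain ⟨p, hgp, hp, modEq⟩ := Nat.forall_exists_prime_gt_and_modEq g (by positivity) coprime
  obtain ⟨j, hj⟩ := (Nat.modEq_iff_dvd' hgp.le).1 modEq.symm
  obtain rfl : p = g + 4 * n * j := by omega
  refine ⟨_, c + 4 * e * j, hp, ?_, by simp [Nat.ModEq], by linear_combination h⟩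
  simp [Nat.ModEq, mul_assoc]

lemma exists_sum_three_sq_of_two_mod_four {n : ℕ} (hn : n % 4 = 2) :
    ∃ a b c : ℤ, (n : ℤ) = a ^ 2 + b ^ 2 + c ^ 2 := by
  obtain ⟨p, d, hp, hp4, hd4, hpd⟩ := exists_prime_mul_add_one_eq (e := 1) (g := n - 1) (c := 1)
    (n := n) (by grind) (by omega) (by omega)
  simp only [Nat.ModEq] at hp4 hd4
  have : Fact p.Prime := ⟨hp⟩
  have hd : Odd d := by grind
  zify at hpd
  have hJ : J(-d | p) = 1 := by
    rw [jacobiSym_neg_left_eq_swap hd (by grind) (by grind),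
      jacobiSym_eq_of_dvd_mul_add_one (e := 1) ⟨n, hpd⟩, jacobiSym.at_neg_one hd,
      ZMod.χ₄_nat_one_mod_four (by omega)]
  obtain ⟨k, hk⟩ := exists_dvd_sq_add_of_jacobiSym_neg_eq_one hJ
  refine exists_sum_three_sq_of_mul_sub_one_dvd (by grind) (by grind) (k := k) (d := d) ?_
  rwa [← hpd, one_mul, add_sub_cancel_right]

lemma exists_sum_three_sq_of_odd {n : ℕ} (hn : Odd n) (hn8 : n % 8 ≠ 7) :
    ∃ a b c : ℤ, (n : ℤ) = a ^ 2 + b ^ 2 + c ^ 2 := by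
  -- `J(-2 | d) = 1` asks for `d ≡ c` to be `1` or `3` modulo `8`
  obtain ⟨c, g, hg, hgc⟩ : ∃ c g, 2 * g + 1 = c * n ∧ (c = 1 ∧ g % 4 = 1 ∨ c = 3 ∧ g % 2 = 1) := by
    by_cases h3 : n % 8 = 3
    · exact ⟨1, n / 2, by grind, by grind⟩
    · exact ⟨3, 3 * n / 2, by grind, by grind⟩
  obtain ⟨p, d, hp, hp4, hd8, hpd⟩ := exists_prime_mul_add_one_eq (by grind) (by grind) hg
  simp only [Nat.ModEq] at hp4 hd8
  have : Fact p.Prime := ⟨hp⟩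
  have hd : Odd d := by grind
  have hmod : p % 4 = 1 ∨ d % 4 = 3 := by grind
  zify at hpd
  have hJ : J(-d | p) = 1 := by
    rw [jacobiSym_neg_left_eq_swap hd (by grind) hmod,
      jacobiSym_eq_of_dvd_mul_add_one ⟨n, hpd⟩, jacobiSym.at_neg_two hd,
      ZMod.χ₈'_nat_eq_if_mod_eight]
    grind
  obtain ⟨k, hk⟩ := exists_dvd_sq_add_of_jacobiSym_neg_eq_one hJ
  obtain ⟨k', hk'⟩ := exists_two_mul_dvd_sq_add (by grind) (by grind) hk
  refine exists_sum_three_sq_of_mul_sub_one_dvd (by grind) (by grind) (k := k') (d := d) ?_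
  rwa [← hpd, add_sub_cancel_right]

/-! ### The ternary form `2x² + z² + zw + w²` -/

/-- The values of the ternary form `2x² + (z² + zw + w²)` at integers. -/
def IsTernaryValue (n : ℤ) : Prop :=
  ∃ x z w : ℤ, n = 2 * x ^ 2 + (z ^ 2 + z * w + w ^ 2)

lemma IsTernaryValue.four_mul {n : ℤ} (h : IsTernaryValue n) : IsTernaryValue (4 * n) := by
  obtain ⟨x, z, w, rfl⟩ := h
  exact ⟨2 * x, 2 * z, 2 * w, by ring⟩

lemma exists_sq_eq_and_emod_three (a : ℤ) :
    ∃ a' : ℤ, a' ^ 2 = a ^ 2 ∧ (a' % 3 = 0 ∨ a' % 3 = 1) := by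
  by_cases h : a % 3 = 2
  · exact ⟨-a, neg_sq a, by omega⟩
  · exact ⟨a, rfl, by omega⟩

lemma sq_emod_three {a : ℤ} (h : a % 3 = 0 ∨ a % 3 = 1) : a ^ 2 % 3 = a % 3 := by
  rcases h with h | h <;> simp [pow_two, Int.mul_emod, h]

lemma sq_emod_two (a : ℤ) : a ^ 2 % 2 = a % 2 := by
  rcases Int.emod_two_eq_zero_or_one a with h | h <;> simp [pow_two, Int.mul_emod, h]

lemma isTernaryValue_of_six_mul_eq_sum_three_sq {n a b c : ℤ}
    (h : 6 * n = a ^ 2 + b ^ 2 + c ^ 2) : IsTernaryValue n := by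
  obtain ⟨a, ha, ha3⟩ := exists_sq_eq_and_emod_three a
  obtain ⟨b, hb, hb3⟩ := exists_sq_eq_and_emod_three b
  obtain ⟨c, hc, hc3⟩ := exists_sq_eq_and_emod_three c
  rw [← ha, ← hb, ← hc] at h
  have ha := sq_emod_three ha3
  have hb := sq_emod_three hb3
  have hc := sq_emod_three hc3
  have ha2 := sq_emod_two a
  have hb2 := sq_emod_two b
  have hc2 := sq_emod_two c
  -- `(a, b, c) = z (1, 1, -2) + w (2, -1, -1) + x (2, 2, 2)`
  obtain ⟨w, hw⟩ : 3 ∣ a - b := by omega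
  obtain ⟨x, hx⟩ : 6 ∣ a + b + c := by omega
  refine ⟨x, b - 2 * x + w, w, ?_⟩
  obtain rfl : a = b + 3 * w := by linarith
  obtain rfl : c = 6 * x - 2 * b - 3 * w := by linarith
  linarith

lemma isTernaryValue_of_mod {n : ℕ} (hn4 : n % 4 ≠ 0) (hn16 : n % 16 ≠ 10) :
    IsTernaryValue n := by
  rcases n.even_or_odd' with ⟨m, rfl | rfl⟩
  · obtain ⟨a, b, c, h⟩ := exists_sum_three_sq_of_odd (n := 3 * m) (by grind) (by omega)
    refine isTernaryValue_of_six_mul_eq_sum_three_sq (a := 2 * a) (b := 2 * b) (c := 2 * c) ?_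
    push_cast at h ⊢
    linear_combination 4 * h
  · obtain ⟨a, b, c, h⟩ := exists_sum_three_sq_of_two_mod_four (n := 6 * (2 * m + 1)) (by omega)
    exact isTernaryValue_of_six_mul_eq_sum_three_sq (mod_cast h)

lemma even_of_even_sq_add_mul_add_sq {z w : ℤ} (h : Even (z ^ 2 + z * w + w ^ 2)) :
    Even z ∧ Even w := by
  simp only [Int.even_add, Int.even_mul, Int.even_pow' two_ne_zero] at h
  tauto

lemma not_isTernaryValue_of_emod_sixteen {n : ℤ} (hn : n % 16 = 10) : ¬ IsTernaryValue n := by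
  rintro ⟨x, z, w, rfl⟩
  obtain ⟨⟨z, rfl⟩, ⟨w, rfl⟩⟩ := even_of_even_sq_add_mul_add_sq (z := z) (w := w) (by grind)
  set N := z ^ 2 + z * w + w ^ 2 with N_def
  have value_eq : (z + z) ^ 2 + (z + z) * (w + w) + (w + w) ^ 2 = 4 * N := by ring
  rw [value_eq] at hn
  have odd_x : Odd x := by
    rw [← Int.not_even_iff_odd]
    rintro ⟨x, rfl⟩
    grind
  have sq_x := Int.eight_dvd_sq_sub_one_of_odd odd_x
  have N_mod : N % 4 = 2 := by omega
  obtain ⟨⟨z, rfl⟩, ⟨w, rfl⟩⟩ := even_of_even_sq_add_mul_add_sq (z := z) (w := w) (by grind)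
  grind

/-! ### The quaternary forms -/

lemma isTernaryValue_of_eq_of_lt {b n : ℕ} (hnb : n < b) {x y z w : ℤ}
    (h : (n : ℤ) = 2 * x ^ 2 + b * y ^ 2 + (z ^ 2 + z * w + w ^ 2)) : IsTernaryValue n := by
  have y_eq_zero : y = 0 := by
    by_contra hy
    have one_le : 1 ≤ y ^ 2 := Int.add_one_le_of_lt (sq_pos_of_ne_zero hy)
    zify at hnb
    nlinarith [sq_nonneg (z + w), sq_nonneg z, sq_nonneg w, sq_nonneg x]
  exact ⟨x, z, w, by rw [h, y_eq_zero]; ring⟩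

lemma exists_eq_isTernaryValue_add_of_mod_sixteen {b n : ℕ} (hb2 : 2 ≤ b) (hb10 : b ≤ 10)
    (hn : n % 16 = 10) : ∃ m y : ℕ, n = m + b * y ^ 2 ∧ IsTernaryValue m := by
  by_cases hb : b = 2 ∨ b = 6 ∨ b = 10
  · rcases hb with rfl | rfl | rfl
    · exact ⟨n - 8, 2, by omega, isTernaryValue_of_mod (by omega) (by omega)⟩
    · obtain ⟨m, hm⟩ : 4 ∣ n - 6 := by omega
      refine ⟨4 * m, 1, by omega, ?_⟩
      exact_mod_cast (isTernaryValue_of_mod (n := m) (by omega) (by omega)).four_mul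
    · rcases (by omega : n = 10 ∨ n = 26 ∨ 40 < n) with rfl | rfl | hn40
      · exact ⟨0, 1, rfl, 0, 0, 0, rfl⟩
      · exact ⟨16, 1, rfl, 0, 4, 0, rfl⟩
      · exact ⟨n - 40, 2, by omega, isTernaryValue_of_mod (by omega) (by omega)⟩
  · exact ⟨n - b, 1, by omega, isTernaryValue_of_mod (by omega) (by omega)⟩

theorem exists_eq_isTernaryValue_add {b : ℕ} (hb2 : 2 ≤ b) (hb10 : b ≤ 10) (n : ℕ) :
    ∃ m y : ℕ, n = m + b * y ^ 2 ∧ IsTernaryValue m := by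
  induction n using Nat.strong_induction_on with
  | _ n ih =>
    by_cases hn16 : n % 16 = 10
    · exact exists_eq_isTernaryValue_add_of_mod_sixteen hb2 hb10 hn16
    by_cases hn4 : n % 4 = 0
    · obtain rfl | hn := n.eq_zero_or_pos
      · exact ⟨0, 0, by simp, 0, 0, 0, rfl⟩
      · obtain ⟨m, y, hm, hmt⟩ := ih (n / 4) (by omega)
        exact ⟨4 * m, 2 * y, by grind, mod_cast hmt.four_mul⟩
    · exact ⟨n, 0, by simp, isTernaryValue_of_mod hn4 hn16⟩

theorem stmt_6 (b : ℕ) (hb : 2 ≤ b) :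
    (∀ n : ℕ, ∃ x y z w : ℤ,
      (n : ℤ) = 2 * x ^ 2 + b * y ^ 2 + (z ^ 2 + z * w + w ^ 2)) ↔
    b ∈ ({2, 3, 4, 5, 6, 7, 8, 9, 10} : Set ℕ) := by
  have mem_iff : b ∈ ({2, 3, 4, 5, 6, 7, 8, 9, 10} : Set ℕ) ↔ b ≤ 10 := by
    simp only [Set.mem_insert_iff, Set.mem_singleton_iff]
    omega
  rw [mem_iff]
  constructor
  · intro universal
    by_contra! hb10
    obtain ⟨x, y, z, w, h⟩ := universal 10
    exact not_isTernaryValue_of_emod_sixteen rfl (isTernaryValue_of_eq_of_lt hb10 h)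
  · intro hb10 n
    obtain ⟨m, y, rfl, x, z, w, hm⟩ := exists_eq_isTernaryValue_add hb hb10 n
    exact ⟨x, y, z, w, by push_cast; rw [hm]; ring⟩
end

section
/- Let a, b be positive integers with a ≤ b. The quadratic form f^{a,b}_2(x,y,z,w) = a·x² + b·y² + 2·(z² + z·w + w²) represents every nonnegative integer (with x, y, z, w ∈ ℤ) if and only if a = 1 and b ∈ {1, 2, 3, 4, 5}. -/
/-!
For `b ≤ 5` the problem reduces to the ternary form `x² + 2(z² + zw + w²)`: it represents every `n`
outside the classes `0 mod 4` and `5 mod 8`. Multiples of `4` are handled by scaling, and the class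
`5 mod 8` by subtracting `b` or `4b`, which moves `n` out of the bad classes.

The ternary form is treated as in Dirichlet's proof of the three-square theorem. Dirichlet's theorem
on primes and quadratic reciprocity give `d ≡ 2 mod 3` such that `-d` is a square modulo `dn - 3`,
and from a square root one writes down a positive definite ternary form of determinant `3` which
represents `n` and whose adjugate represents `d`. Hermite's bound on the minimum leaves two classes
of determinant `3`, namely `x² + y² + 3z²` and `x² + 2(z² + zw + w²)`. The adjugate of the first is
`3x² + 3y² + z²`, which does not take values `≡ 2 mod 3`; hence the form is the second one.

Conversely, representing `1` forces `a = 1`, and representing `5` forces `b ≤ 5`, since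
`x² + 2(z² + zw + w²)` omits `5`.
-/

open Matrix
open scoped NumberTheorySymbols

/-- Congruence of square matrices: `M` and `N` are Gram matrices of the same bilinear form with
respect to two bases. -/
def IsCongr {ι R : Type*} [Fintype ι] [DecidableEq ι] [CommRing R] (M N : Matrix ι ι R) : Prop :=
  ∃ P : Matrix ι ι R, IsUnit P ∧ Pᵀ * M * P = N

/-- The quadratic form with Gram matrix `M` takes the value `k`; no definiteness is assumed, and the
zero vector is allowed. -/
def FormRepresents {ι R : Type*} [Fintype ι] [CommRing R] (M : Matrix ι ι R) (k : R) : Prop :=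
  ∃ v : ι → R, v ⬝ᵥ M *ᵥ v = k

section Congruence

variable {ι R : Type*} [Fintype ι] [CommRing R]

lemma dotProduct_transpose_mul_mul_mulVec (M P : Matrix ι ι R) (u v : ι → R) :
    u ⬝ᵥ (Pᵀ * M * P) *ᵥ v = (P *ᵥ u) ⬝ᵥ M *ᵥ (P *ᵥ v) := by
  simp only [← mulVec_mulVec, dotProduct_mulVec, vecMul_transpose]

lemma transpose_mul_mul_apply (M P : Matrix ι ι R) (i j : ι) :
    (Pᵀ * M * P) i j = P.col i ⬝ᵥ M *ᵥ P.col j := by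
  classical
  simpa using dotProduct_transpose_mul_mul_mulVec M P (Pi.single i 1) (Pi.single j 1)

lemma formRepresents_diag (M : Matrix ι ι R) (i : ι) : FormRepresents M (M i i) := by
  classical
  exact ⟨Pi.single i 1, by simp⟩

variable [DecidableEq ι]

namespace IsCongr

variable {M N K : Matrix ι ι R}

lemma trans (hMN : IsCongr M N) (hNK : IsCongr N K) : IsCongr M K := by
  obtain ⟨P, hP, rfl⟩ := hMN
  obtain ⟨Q, hQ, rfl⟩ := hNK
  exact ⟨P * Q, hP.mul hQ, by simp only [transpose_mul, Matrix.mul_assoc]⟩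

lemma refl (M : Matrix ι ι R) : IsCongr M M :=
  ⟨1, isUnit_one, by simp⟩

lemma submatrix (M : Matrix ι ι R) (e : Equiv.Perm ι) : IsCongr M (M.submatrix e e) := by
  refine ⟨Equiv.Perm.permMatrix R e⁻¹, ?_, ?_⟩
  · rw [isUnit_iff_isUnit_det, det_permutation]
    exact (Equiv.Perm.sign e⁻¹).isUnit.map (Int.castRingHom R)
  · rw [transpose_permMatrix, inv_inv, PEquiv.toMatrix_toPEquiv_mul, PEquiv.mul_toMatrix_toPEquiv,
      submatrix_submatrix]
    rfl

lemma formRepresents {k : R} (h : IsCongr M N) (hk : FormRepresents M k) : FormRepresents N k := by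
  obtain ⟨P, hP, rfl⟩ := h
  obtain ⟨v, rfl⟩ := hk
  refine ⟨P⁻¹ *ᵥ v, ?_⟩
  rw [dotProduct_transpose_mul_mul_mulVec, mulVec_mulVec,
    mul_nonsing_inv _ ((isUnit_iff_isUnit_det P).1 hP), one_mulVec]

lemma adjugate (h : IsCongr M N) : IsCongr M.adjugate N.adjugate := by
  obtain ⟨P, hP, rfl⟩ := h
  refine ⟨P.adjugateᵀ, ?_, ?_⟩
  · rw [isUnit_transpose, isUnit_iff_isUnit_det, det_adjugate]
    exact ((isUnit_iff_isUnit_det P).1 hP).pow _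
  · simp only [adjugate_mul_distrib, adjugate_transpose, Matrix.mul_assoc, transpose_transpose]

end IsCongr

end Congruence

namespace IsCongr

variable {ι : Type*} [Fintype ι] [DecidableEq ι] {M N : Matrix ι ι ℤ}

lemma det_eq (h : IsCongr M N) : N.det = M.det := by
  obtain ⟨P, hP, rfl⟩ := h
  have hP' := Int.isUnit_sq ((isUnit_iff_isUnit_det P).1 hP)
  rw [det_mul, det_mul, det_transpose]
  linear_combination M.det * hP'

lemma posDef {R : Type*} [CommRing R] [PartialOrder R] [StarRing R] [TrivialStar R]
    {M N : Matrix ι ι R} (h : IsCongr M N) (hM : M.PosDef) : N.PosDef := by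
  obtain ⟨P, hP, rfl⟩ := h
  rw [← conjTranspose_eq_transpose_of_trivial]
  exact hM.conjTranspose_mul_mul_same (mulVec_injective_of_isUnit hP)

end IsCongr

lemma exists_isCongr_forall_diag_le {ι : Type*} [Fintype ι] [DecidableEq ι] {M : Matrix ι ι ℤ}
    (hM : M.PosDef) (i : ι) :
    ∃ N, IsCongr M N ∧ ∀ N', IsCongr N N' → ∀ j, N i i ≤ N' j j := by
  obtain ⟨⟨N, j⟩, hN, hmin⟩ := exists_minimalFor_of_wellFoundedLT
    (fun x : Matrix ι ι ℤ × ι ↦ IsCongr M x.1) (fun x ↦ (x.1 x.2 x.2).toNat) ⟨(M, i), .refl M⟩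
  have hcongr := hN.trans (.submatrix N (Equiv.swap i j))
  refine ⟨_, hcongr, fun N' hN' k ↦ ?_⟩
  have hpos := ((hcongr.trans hN').posDef hM).diag_pos (i := k)
  have hle := hmin (j := (N', k)) (hcongr.trans hN')
  simp only [submatrix_apply, Equiv.swap_apply_left] at hle ⊢
  omega

section Condensation

variable {R : Type*} [CommRing R] {n : ℕ}

/-- The block upper triangular matrix with rows `(c, x)` and `(0, Q)`. For `c = 1` and `x = 0` it is
the Gram matrix of the orthogonal sum of the form `x²` with the form of `Q`. -/
def border (c : R) (x : Fin n → R) (Q : Matrix (Fin n) (Fin n) R) :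
    Matrix (Fin (n + 1)) (Fin (n + 1)) R :=
  of (Fin.cons (Fin.cons c x) fun i ↦ Fin.cons 0 (Q i))

section Border

variable (c : R) (x : Fin n → R) (Q : Matrix (Fin n) (Fin n) R)

@[simp] lemma border_zero_zero : border c x Q 0 0 = c := rfl
@[simp] lemma border_zero_succ (j : Fin n) : border c x Q 0 j.succ = x j := rfl
@[simp] lemma border_succ_zero (i : Fin n) : border c x Q i.succ 0 = 0 := rfl
@[simp] lemma border_succ_succ (i j : Fin n) : border c x Q i.succ j.succ = Q i j := rfl

lemma col_zero_border : (border c x Q).col 0 = Fin.cons c 0 := by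
  ext i
  cases i using Fin.cases <;> rfl

lemma col_succ_border (j : Fin n) : (border c x Q).col j.succ = Fin.cons (x j) (Q.col j) := by
  ext i
  cases i using Fin.cases <;> rfl

lemma det_border : (border c x Q).det = c * Q.det := by
  rw [det_succ_column_zero, Fin.sum_univ_succ]
  simp [show (border c x Q).submatrix Fin.succ Fin.succ = Q from rfl]

variable {Q} in
lemma isUnit_border_one (hQ : IsUnit Q) : IsUnit (border 1 x Q) := by
  rwa [isUnit_iff_isUnit_det, det_border, one_mul, ← isUnit_iff_isUnit_det]

end Border

/-- Chiò condensation, that is, `M 0 0` times the Schur complement of the corner entry. It is the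
Gram matrix of what remains of the form `M 0 0 * M` after completing the square, and it has entries
in `R` without any division. -/
def condense (M : Matrix (Fin (n + 1)) (Fin (n + 1)) R) : Matrix (Fin n) (Fin n) R :=
  of fun i j ↦ M 0 0 * M i.succ j.succ - M i.succ 0 * M 0 j.succ

lemma condense_apply (M : Matrix (Fin (n + 1)) (Fin (n + 1)) R) (i j : Fin n) :
    condense M i j = M 0 0 * M i.succ j.succ - M i.succ 0 * M 0 j.succ := rfl

lemma mul_mulVec_succ (M : Matrix (Fin (n + 1)) (Fin (n + 1)) R) (v : Fin (n + 1) → R)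
    (i : Fin n) :
    M 0 0 * (M *ᵥ v) i.succ = M i.succ 0 * (M *ᵥ v) 0 + (condense M *ᵥ Fin.tail v) i := by
  simp only [mulVec, dotProduct, Fin.sum_univ_succ, condense_apply, Fin.tail, sub_mul,
    Finset.sum_sub_distrib, mul_add, Finset.mul_sum, mul_assoc]
  ring

lemma mul_dotProduct_mulVec (M : Matrix (Fin (n + 1)) (Fin (n + 1)) R) (u v : Fin (n + 1) → R) :
    M 0 0 * (u ⬝ᵥ M *ᵥ v) =
      (u ᵥ* M) 0 * (M *ᵥ v) 0 + Fin.tail u ⬝ᵥ condense M *ᵥ Fin.tail v := by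
  rw [dotProduct, Fin.sum_univ_succ, mul_add, Finset.mul_sum, vecMul, dotProduct,
    Fin.sum_univ_succ, add_mul, add_assoc, Finset.sum_mul, dotProduct, ← Finset.sum_add_distrib]
  congr 1
  · ring
  · refine Finset.sum_congr rfl fun i _ ↦ ?_
    rw [Fin.tail]
    linear_combination u i.succ * mul_mulVec_succ M v i

lemma mul_det_condense (M : Matrix (Fin (n + 1)) (Fin (n + 1)) R) :
    M 0 0 * (condense M).det = M 0 0 ^ n * M.det := by
  let scale : Fin (n + 1) → R := Fin.cons 1 fun _ ↦ M 0 0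
  have hscale : (of fun i j ↦ scale i * M i j).det = M 0 0 ^ n * M.det := by
    rw [det_mul_column, Fin.prod_univ_succ]
    simp [scale]
  rw [← hscale, ← det_border _ fun j ↦ M 0 j.succ]
  refine (det_eq_of_forall_row_eq_smul_add_const (Fin.cons 0 fun i ↦ M i.succ 0) 0 rfl ?_).symm
  intro i j
  cases i using Fin.cases <;> cases j using Fin.cases <;> simp [scale, condense_apply, mul_comm]

lemma mul_dotProduct_mulVec_self {M : Matrix (Fin (n + 1)) (Fin (n + 1)) R} (hM : M.IsSymm)
    (v : Fin (n + 1) → R) :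
    M 0 0 * (v ⬝ᵥ M *ᵥ v) = (M *ᵥ v) 0 ^ 2 + Fin.tail v ⬝ᵥ condense M *ᵥ Fin.tail v := by
  rw [mul_dotProduct_mulVec, ← mulVec_transpose, hM, sq]

lemma isSymm_condense {M : Matrix (Fin (n + 1)) (Fin (n + 1)) R} (hM : M.IsSymm) :
    (condense M).IsSymm := by
  ext i j
  rw [transpose_apply, condense_apply, condense_apply, hM.apply i.succ j.succ, hM.apply 0 j.succ,
    hM.apply i.succ 0, mul_comm (M 0 j.succ)]

lemma isCongr_border_of_condense {M : Matrix (Fin (n + 1)) (Fin (n + 1)) R} (hM : M.IsSymm)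
    (h1 : M 0 0 = 1) {B : Matrix (Fin n) (Fin n) R} (h : IsCongr (condense M) B) :
    IsCongr M (border 1 0 B) := by
  obtain ⟨Q, hQ, rfl⟩ := h
  set P := border 1 (fun j ↦ -∑ i : Fin n, M 0 i.succ * Q i j) Q
  refine ⟨P, isUnit_border_one _ hQ, ?_⟩
  have hzero : (M *ᵥ P.col 0) 0 = 1 := by
    simp [P, mulVec, dotProduct, Fin.sum_univ_succ, h1]
  have hsucc (j : Fin n) : (M *ᵥ P.col j.succ) 0 = 0 := by
    simp [P, mulVec, dotProduct, Fin.sum_univ_succ, h1]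
  have htail_zero : Fin.tail (P.col 0) = 0 := by rw [col_zero_border, Fin.tail_cons]
  have htail_succ (j : Fin n) : Fin.tail (P.col j.succ) = Q.col j := by
    rw [col_succ_border, Fin.tail_cons]
  ext i j
  rw [transpose_mul_mul_apply, ← one_mul (_ ⬝ᵥ _), ← h1, mul_dotProduct_mulVec, ← mulVec_transpose,
    hM]
  cases i using Fin.cases <;> cases j using Fin.cases <;>
    simp [hzero, hsucc, htail_zero, htail_succ, h1, transpose_mul_mul_apply]

end Condensation

section PosDef

variable {R : Type*} [CommRing R] [LinearOrder R] [IsStrictOrderedRing R] [StarRing R]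
  [TrivialStar R] {n : ℕ} {M : Matrix (Fin (n + 1)) (Fin (n + 1)) R}

lemma posDef_condense (hM : M.PosDef) : (condense M).PosDef := by
  have hsymm := isHermitian_iff_isSymm.1 hM.isHermitian
  have h0 : 0 < M 0 0 := hM.diag_pos
  refine .of_dotProduct_mulVec_pos (isHermitian_iff_isSymm.2 (isSymm_condense hsymm)) fun v hv ↦ ?_
  let u : Fin (n + 1) → R := Fin.cons (-∑ j, M 0 j.succ * v j) (M 0 0 • v)
  have hu : (M *ᵥ u) 0 = 0 := by
    simp [u, mulVec, dotProduct, Fin.sum_univ_succ, Finset.mul_sum, mul_left_comm]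
  have hu0 : u ≠ 0 := fun h ↦ hv (funext fun i ↦ by
    simpa [u, h0.ne'] using congrFun h i.succ)
  have hpos := mul_pos h0 (hM.dotProduct_mulVec_pos hu0)
  rw [star_trivial, mul_dotProduct_mulVec_self hsymm, hu, Fin.tail_cons, mulVec_smul,
    dotProduct_smul, smul_dotProduct, smul_eq_mul, smul_eq_mul, sq, zero_mul, zero_add] at hpos
  rw [star_trivial]
  exact pos_of_mul_pos_right (pos_of_mul_pos_right hpos h0.le) h0.le

lemma posDef_of_condense (hM : M.IsSymm) (h0 : 0 < M 0 0) (h : (condense M).PosDef) :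
    M.PosDef := by
  refine .of_dotProduct_mulVec_pos (isHermitian_iff_isSymm.2 hM) fun v hv ↦ ?_
  have hsq := mul_dotProduct_mulVec_self hM v
  rw [star_trivial]
  refine pos_of_mul_pos_right (hsq ▸ ?_) h0.le
  by_cases htail : Fin.tail v = 0
  · have hsucc (i : Fin n) : v i.succ = 0 := congrFun htail i
    have hv0 : v 0 ≠ 0 := fun h ↦ hv (funext (Fin.cases h hsucc))
    have hM0 : (M *ᵥ v) 0 ≠ 0 := by
      simpa [mulVec, dotProduct, Fin.sum_univ_succ, hsucc] using ⟨h0.ne', hv0⟩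
    simpa [htail] using sq_pos_of_ne_zero hM0
  · have := h.dotProduct_mulVec_pos htail
    rw [star_trivial] at this
    positivity

lemma posDef_fin_one {M : Matrix (Fin 1) (Fin 1) R} (h : 0 < M 0 0) : M.PosDef :=
  posDef_of_condense (.ext fun i j ↦ by fin_cases i, j; rfl) h
    (.of_dotProduct_mulVec_pos (Subsingleton.elim _ _) fun _ hv ↦ (hv (Subsingleton.elim _ _)).elim)

lemma posDef_fin_three_of_minors_pos {M : Matrix (Fin 3) (Fin 3) R} (hM : M.IsSymm)
    (h1 : 0 < M 0 0) (h2 : 0 < M 0 0 * M 1 1 - M 1 0 * M 0 1) (h3 : 0 < M.det) : M.PosDef := by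
  refine posDef_of_condense hM h1 (posDef_of_condense (isSymm_condense hM) h2 (posDef_fin_one ?_))
  have hdet := mul_det_condense M
  rw [det_fin_two] at hdet
  have hpos : 0 < M 0 0 * (condense M 0 0 * condense M 1 1 - condense M 0 1 * condense M 1 0) :=
    hdet ▸ by positivity
  rw [mul_comm (condense M 0 1)] at hpos
  exact pos_of_mul_pos_right hpos h1.le

end PosDef

section Hermite

lemma exists_abs_two_mul_add_mul_le (u : ℤ) {v : ℤ} (hv : 0 < v) :
    ∃ k : ℤ, |2 * (u + k * v)| ≤ v := by
  have hdiv := Int.emod_add_mul_ediv (2 * u + v) (2 * v)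
  have hnonneg := Int.emod_nonneg (2 * u + v) (by positivity : 2 * v ≠ 0)
  have hlt := Int.emod_lt_of_pos (2 * u + v) (by positivity : 0 < 2 * v)
  exact ⟨-((2 * u + v) / (2 * v)), abs_le.2 ⟨by linarith, by linarith⟩⟩

variable {n : ℕ}

lemma three_mul_sq_le_four_mul_of_forall_le {N : Matrix (Fin (n + 2)) (Fin (n + 2)) ℤ}
    (hN : N.PosDef) (hmin : ∀ N', IsCongr N N' → N 0 0 ≤ N' 1 1)
    {B : Matrix (Fin (n + 1)) (Fin (n + 1)) ℤ} (hB : IsCongr (condense N) B) :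
    3 * N 0 0 ^ 2 ≤ 4 * B 0 0 := by
  obtain ⟨Q, hQ, rfl⟩ := hB
  have hpos : 0 < N 0 0 := hN.diag_pos
  obtain ⟨k, hk⟩ := exists_abs_two_mul_add_mul_le (∑ j : Fin (n + 1), N 0 j.succ * Q j 0) hpos
  set v : Fin (n + 2) → ℤ := Fin.cons k (Q.col 0)
  have hle : N 0 0 ≤ v ⬝ᵥ N *ᵥ v := by
    have := hmin _ ⟨_, isUnit_border_one (fun _ ↦ k) hQ, rfl⟩
    rwa [transpose_mul_mul_apply, ← Fin.succ_zero_eq_one, col_succ_border] at this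
  have hsq := mul_dotProduct_mulVec_self (isHermitian_iff_isSymm.1 hN.isHermitian) v
  rw [Fin.tail_cons, ← transpose_mul_mul_apply] at hsq
  have habs : |2 * (N *ᵥ v) 0| ≤ N 0 0 := by
    convert hk using 3
    simp only [v, mulVec, dotProduct, col_apply, Fin.sum_univ_succ, Fin.cons_zero, Fin.cons_succ]
    ring
  have hsq_le : (2 * (N *ᵥ v) 0) ^ 2 ≤ N 0 0 ^ 2 := sq_le_sq' (abs_le.1 habs).1 (abs_le.1 habs).2
  nlinarith

/-- Hermite's bound on the minimum of a positive definite integral form. -/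
theorem exists_isCongr_pow_le_det {M : Matrix (Fin (n + 1)) (Fin (n + 1)) ℤ} (hM : M.PosDef) :
    ∃ N, IsCongr M N ∧
      3 ^ (n + 1).choose 2 * N 0 0 ^ (n + 1) ≤ 4 ^ (n + 1).choose 2 * M.det := by
  induction n with
  | zero => exact ⟨M, .refl M, by simp⟩
  | succ n ih =>
    obtain ⟨N, hMN, hmin⟩ := exists_isCongr_forall_diag_le hM 0
    have hN := hMN.posDef hM
    obtain ⟨B, hB, hBdet⟩ := ih (posDef_condense hN)
    have hsq := three_mul_sq_le_four_mul_of_forall_le hN (fun N' hN' ↦ hmin N' hN' 1) hB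
    have hpos : 0 < N 0 0 := hN.diag_pos
    have hdet : (condense N).det = N 0 0 ^ n * M.det := by
      refine mul_left_cancel₀ hpos.ne' ?_
      rw [mul_det_condense, hMN.det_eq, pow_succ', mul_assoc]
    refine ⟨N, hMN, le_of_mul_le_mul_left ?_ (pow_pos hpos n)⟩
    have hchoose : (n + 2).choose 2 = (n + 1).choose 2 + (n + 1) := by
      rw [Nat.choose_succ_succ', Nat.choose_one_right, add_comm]
    calc N 0 0 ^ n * (3 ^ (n + 2).choose 2 * N 0 0 ^ (n + 2))
        = 3 ^ (n + 1).choose 2 * (3 * N 0 0 ^ 2) ^ (n + 1) := by rw [hchoose]; ring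
      _ ≤ 3 ^ (n + 1).choose 2 * (4 * B 0 0) ^ (n + 1) := by gcongr
      _ = 4 ^ (n + 1) * (3 ^ (n + 1).choose 2 * B 0 0 ^ (n + 1)) := by ring
      _ ≤ 4 ^ (n + 1) * (4 ^ (n + 1).choose 2 * (N 0 0 ^ n * M.det)) := by
        rw [← hdet]; gcongr
      _ = N 0 0 ^ n * (4 ^ (n + 2).choose 2 * M.det) := by rw [hchoose]; ring

end Hermite

section DetThree

lemma isCongr_shear {R : Type*} [CommRing R] {a b c b' c' : R} (k : R) (hb : b' = b + k * a)
    (hc : c' = c + 2 * k * b + k ^ 2 * a) : IsCongr !![a, b; b, c] !![a, b'; b', c'] := by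
  refine ⟨!![1, k; 0, 1], by simp [isUnit_iff_isUnit_det], ?_⟩
  ext i j
  fin_cases i, j <;> simp [mul_apply, Fin.sum_univ_two, hb, hc] <;> ring

lemma isCongr_of_det_eq_three_fin_two {M : Matrix (Fin 2) (Fin 2) ℤ} (hM : M.PosDef)
    (hdet : M.det = 3) : IsCongr M !![1, 0; 0, 3] ∨ IsCongr M !![2, 1; 1, 2] := by
  obtain ⟨N, hMN, hbound⟩ := exists_isCongr_pow_le_det hM
  have hN := hMN.posDef hM
  have hsymm := (isHermitian_iff_isSymm.1 hN.isHermitian).apply 0 1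
  have hNdet : N 0 0 * N 1 1 - N 0 1 * N 0 1 = 3 := by
    rw [← hdet, ← hMN.det_eq, det_fin_two, hsymm]
  have hpos : 0 < N 0 0 := hN.diag_pos
  have hle : N 0 0 ≤ 2 := by
    have hsq : 3 * N 0 0 ^ 2 ≤ 4 * 3 := by simpa [hdet] using hbound
    nlinarith
  have hN_eq : N = !![N 0 0, N 0 1; N 0 1, N 1 1] := (eta_fin_two N).trans (by rw [hsymm])
  obtain h1 | h2 : N 0 0 = 1 ∨ N 0 0 = 2 := by omega
  · refine .inl (hMN.trans ?_)
    rw [h1] at hNdet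
    rw [hN_eq, h1]
    exact isCongr_shear (-N 0 1) (by ring) (by linarith)
  · refine .inr (hMN.trans ?_)
    rw [h2] at hNdet
    obtain ⟨s, hs | hs⟩ := Int.even_or_odd' (N 0 1)
    · have : 2 * (N 1 1 - 2 * s ^ 2) = 3 := by
        rw [hs] at hNdet
        linarith
      omega
    · rw [hN_eq, h2]
      exact isCongr_shear (-s) (by linarith) (by rw [hs] at hNdet ⊢; linarith)

lemma isCongr_of_det_eq_three_fin_three {M : Matrix (Fin 3) (Fin 3) ℤ} (hM : M.PosDef)
    (hdet : M.det = 3) :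
    IsCongr M !![1, 0, 0; 0, 1, 0; 0, 0, 3] ∨ IsCongr M !![1, 0, 0; 0, 2, 1; 0, 1, 2] := by
  obtain ⟨N, hMN, hbound⟩ := exists_isCongr_pow_le_det hM
  have hN := hMN.posDef hM
  have hsymm := isHermitian_iff_isSymm.1 hN.isHermitian
  have hpos : 0 < N 0 0 := hN.diag_pos
  have h1 : N 0 0 = 1 := by
    have hcube : 27 * N 0 0 ^ 3 ≤ 64 * 3 := by simpa [hdet, Nat.choose] using hbound
    by_contra hne
    have := pow_le_pow_left₀ zero_le_two (show 2 ≤ N 0 0 by omega) 3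
    linarith
  have hcdet : (condense N).det = 3 := by
    simpa [h1, hMN.det_eq, hdet] using mul_det_condense N
  refine (isCongr_of_det_eq_three_fin_two (posDef_condense hN) hcdet).imp (fun h ↦ ?_) (fun h ↦ ?_)
  all_goals
    convert hMN.trans (isCongr_border_of_condense hsymm h1 h) using 1
    decide

lemma not_formRepresents_adjugate_of_emod_three_eq_two {k : ℤ} (hk : k % 3 = 2) :
    ¬ FormRepresents !![1, 0, 0; 0, 1, 0; 0, 0, 3].adjugate k := by
  rintro ⟨v, hv⟩
  have : k = 3 * (v 0 ^ 2 + v 1 ^ 2) + v 2 ^ 2 := by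
    rw [← hv, adjugate_fin_three]
    simp only [dotProduct, mulVec, Fin.sum_univ_three, of_apply, cons_val', cons_val_zero,
      cons_val_one, cons_val_fin_one, cons_val]
    ring
  have hsq : v 2 ^ 2 % 3 = 2 := by omega
  obtain h | h | h : v 2 % 3 = 0 ∨ v 2 % 3 = 1 ∨ v 2 % 3 = 2 := by omega
  all_goals simp [pow_two, Int.mul_emod, h] at hsq

lemma exists_eq_ternary_of_det_eq_three {M : Matrix (Fin 3) (Fin 3) ℤ} (hM : M.PosDef)
    (hdet : M.det = 3) {k : ℤ} (hk : k % 3 = 2) (hadj : FormRepresents M.adjugate k) {n : ℤ}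
    (hn : FormRepresents M n) :
    ∃ x z w : ℤ, n = x ^ 2 + 2 * (z ^ 2 + z * w + w ^ 2) := by
  have hcongr := (isCongr_of_det_eq_three_fin_three hM hdet).resolve_left fun h ↦
    not_formRepresents_adjugate_of_emod_three_eq_two hk (h.adjugate.formRepresents hadj)
  obtain ⟨v, rfl⟩ := hcongr.formRepresents hn
  refine ⟨v 0, v 1, v 2, ?_⟩
  simp only [dotProduct, mulVec, Fin.sum_univ_three, of_apply, cons_val', cons_val_zero,
    cons_val_one, cons_val_fin_one, cons_val]
  ring

end DetThree

section Residues

lemma exists_prime_gt_and_add_mul_eq_gcd_mul (B a : ℕ) {q : ℕ} (hq : q ≠ 0) :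
    ∃ k p, p.Prime ∧ B < p ∧ a + q * k = a.gcd q * p := by
  have hg : 0 < a.gcd q := Nat.gcd_pos_of_pos_right a hq.bot_lt
  have hqg : q / a.gcd q ≠ 0 := (Nat.div_pos (Nat.gcd_le_right a hq.bot_lt) hg).ne'
  obtain ⟨p, hBp, hp, hmod⟩ := Nat.forall_exists_prime_gt_and_modEq (max B (a / a.gcd q)) hqg
    (Nat.coprime_div_gcd_div_gcd hg)
  obtain ⟨k, hk⟩ := (Nat.modEq_iff_dvd' ((le_max_right _ _).trans hBp.le)).1 hmod.symm
  refine ⟨k, p, hp, (le_max_left _ _).trans_lt hBp, ?_⟩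
  rw [← Nat.sub_add_cancel ((le_max_right B _).trans hBp.le), hk, mul_add, ← mul_assoc,
    Nat.mul_div_cancel' (Nat.gcd_dvd_right a q), Nat.mul_div_cancel' (Nat.gcd_dvd_left a q),
    add_comm]

lemma isSquare_intCast_zmod_mul {m n : ℕ} (h : m.Coprime n) {a : ℤ} (hm : IsSquare (a : ZMod m))
    (hn : IsSquare (a : ZMod n)) : IsSquare (a : ZMod (m * n)) := by
  have : IsSquare (a : ZMod m × ZMod n) := by
    obtain ⟨s, hs⟩ := hm
    obtain ⟨t, ht⟩ := hn
    exact ⟨(s, t), Prod.ext hs ht⟩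
  simpa using this.map (ZMod.chineseRemainder h).symm

lemma isSquare_neg_intCast_zmod {d : ℕ} (hd : d % 6 = 5) {c : ℕ} (hc : c ∣ 18) :
    IsSquare ((-d : ℤ) : ZMod c) := by
  suffices h : IsSquare ((-d : ℤ) : ZMod 18) by
    simpa only [map_intCast] using h.map (ZMod.castHom hc (ZMod c))
  rw [← ZMod.intCast_mod]
  obtain h | h | h : (-d : ℤ) % ↑(18 : ℕ) = 1 ∨ (-d : ℤ) % ↑(18 : ℕ) = 7 ∨
    (-d : ℤ) % ↑(18 : ℕ) = 13 := by omega
  all_goals rw [h]; decide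

lemma jacobiSym_neg_three {d : ℕ} (hd : d % 6 = 5) : J(-3 | d) = -1 := by
  have hodd : Odd d := Nat.odd_iff.2 (by omega)
  obtain h | h : d % 12 = 5 ∨ d % 12 = 11 := by omega
  all_goals rw [jacobiSym.mod_right _ hodd]; norm_num [h]

lemma jacobiSym_neg_of_mod_four_eq_three {d m : ℕ} (hd : d % 4 = 3) (hm : Odd m) :
    J(-d | m) = J(m | d) := by
  rw [jacobiSym.neg _ hm]
  obtain hm4 | hm4 : m % 4 = 1 ∨ m % 4 = 3 := by grind
  · rw [ZMod.χ₄_nat_one_mod_four hm4, one_mul,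
      jacobiSym.quadratic_reciprocity_one_mod_four' (Nat.odd_iff.2 (by omega)) hm4]
  · rw [ZMod.χ₄_nat_three_mod_four hm4, jacobiSym.quadratic_reciprocity_three_mod_four hd hm4,
      neg_one_mul, neg_neg]

lemma jacobiSym_neg_of_mod_four_eq_one {d m : ℕ} (hd : d % 4 = 1) (hm : m % 4 = 3) :
    J(-d | m) = -J(m | d) := by
  have hodd : Odd m := Nat.odd_iff.2 (by omega)
  rw [jacobiSym.neg _ hodd, ZMod.χ₄_nat_three_mod_four hm, neg_one_mul,
    jacobiSym.quadratic_reciprocity_one_mod_four hd hodd]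

lemma jacobiSym_neg_eq_one {d m g n : ℕ} (hd : d % 6 = 5) (h : g * m + 3 = d * n)
    (hmod : d % 4 = 1 ∧ m % 4 = 3 ∧ J(g | d) = 1 ∨ d % 4 = 3 ∧ Odd m ∧ J(g | d) = -1) :
    J(-d | m) = 1 := by
  have hprod : J(g | d) * J(m | d) = -1 := by
    have hdiv : (g * m : ℤ) = -3 + d * n := by
      rw [← Nat.cast_mul d, ← h]
      push_cast
      ring
    rw [← jacobiSym.mul_left, jacobiSym.mod_left, hdiv, Int.add_mul_emod_self_left,
      ← jacobiSym.mod_left, jacobiSym_neg_three hd]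
  rcases hmod with ⟨hd4, hm, hg⟩ | ⟨hd4, hm, hg⟩
  · rw [hg, one_mul] at hprod
    rw [jacobiSym_neg_of_mod_four_eq_one hd4 hm, hprod, neg_neg]
  · rw [hg, neg_one_mul, neg_inj] at hprod
    rwa [jacobiSym_neg_of_mod_four_eq_three hd4 hm]

lemma isSquare_neg_of_jacobiSym {d g e p : ℕ} (hp : p.Prime) (hp3 : 3 < p) (hd : d % 6 = 5)
    (hg : g ∣ 2) (he : e ∣ 3 ^ 2) (hJ : J(-d | e * p) = 1) :
    IsSquare ((-d : ℤ) : ZMod (g * e * p)) := by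
  have : Fact p.Prime := ⟨hp⟩
  obtain ⟨i, -, rfl⟩ := (Nat.dvd_prime_pow Nat.prime_three).1 he
  have hJp : J(-d | p) = 1 := by
    have hJ3 : J(-d | 3) = 1 := by
      rw [jacobiSym.mod_left, show (-d : ℤ) % (3 : ℕ) = 1 by omega, jacobiSym.one_left]
    rwa [jacobiSym.mul_right, jacobiSym.pow_right, hJ3, one_pow, one_mul] at hJ
  have hdvd : g * 3 ^ i ∣ 18 := mul_dvd_mul hg he
  have hcop : (g * 3 ^ i).Coprime p := .of_dvd_left hdvd <| by
    rw [show 18 = 2 * 3 ^ 2 from rfl]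
    exact .mul_left (Nat.coprime_primes Nat.prime_two hp |>.2 (by omega))
      (.pow_left 2 (Nat.coprime_primes Nat.prime_three hp |>.2 hp3.ne))
  exact isSquare_intCast_zmod_mul hcop (isSquare_neg_intCast_zmod hd hdvd)
    (ZMod.isSquare_of_jacobiSym_eq_one hJp)

lemma gcd_dvd_three_sq_of_mul_add_three_eq {n r g A s : ℕ} (hA : g * A + 3 = r * n)
    (hs : g * s = 24) (hodd : Odd A) : A.gcd (s * n) ∣ 3 ^ 2 := by
  set e := A.gcd (s * n)
  have he : e ∣ g * A := dvd_mul_of_dvd_right (Nat.gcd_dvd_left _ _) g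
  have hcop : e.Coprime (2 ^ 3) :=
    .pow_right 3 (Nat.coprime_two_right.2 (hodd.of_dvd_nat (Nat.gcd_dvd_left _ _)))
  have h3n : e ∣ 3 * n := hcop.dvd_of_dvd_mul_left <| by
    have h24 : 2 ^ 3 * (3 * n) = g * (s * n) := by rw [← mul_assoc g, hs]; ring
    exact h24 ▸ dvd_mul_of_dvd_right (Nat.gcd_dvd_right _ _) g
  refine (Nat.dvd_add_right (he.mul_left 3)).1 ?_
  have heq : 3 * (g * A) + 3 ^ 2 = r * (3 * n) := by linear_combination 3 * hA
  exact heq ▸ h3n.mul_left r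

lemma exists_isSquare_neg_of_mul_add_three_eq {n r g A s : ℕ} (hn : n ≠ 0)
    (hA : g * A + 3 = r * n) (hs : g * s = 24) (hg : g ∣ 2) (hr : r % 6 = 5)
    (hmod : r % 8 = 1 ∧ A % 4 = 3 ∨ r % 8 = 3 ∧ Odd A ∧ g = 2) :
    ∃ d m : ℕ, d % 3 = 2 ∧ 0 < m ∧ m + 3 = d * n ∧ IsSquare ((-d : ℤ) : ZMod m) := by
  have hg' : g = 1 ∨ g = 2 := (Nat.dvd_prime Nat.prime_two).1 hg
  have hs4 : 4 ∣ s := by rcases hg' with rfl | rfl <;> omega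
  have hodd : Odd A := by grind
  have hs0 : s ≠ 0 := by rintro rfl; omega
  have hdvd := gcd_dvd_three_sq_of_mul_add_three_eq hA hs hodd
  -- With `d = r + 24 * k` Dirichlet's theorem gives `d * n - 3 = g * e * p`, where `p` is prime and
  -- `e ∣ 9`; modulo `g * e` the number `-d` is always a square.
  obtain ⟨k, p, hp, hp3, hkp⟩ := exists_prime_gt_and_add_mul_eq_gcd_mul 3 A (mul_ne_zero hs0 hn)
  have hmn : g * (A + s * n * k) + 3 = (r + 24 * k) * n := by
    rw [← hs]
    linear_combination hA
  have hJ : J(-(r + 24 * k : ℕ) | A + s * n * k) = 1 := by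
    have hk4 : 4 ∣ s * n * k := (hs4.mul_right n).mul_right k
    have hodd : Odd (r + 24 * k) := Nat.odd_iff.2 (by omega)
    refine jacobiSym_neg_eq_one (by omega) hmn (hmod.imp ?_ ?_)
    · rintro ⟨hr8, hA4⟩
      refine ⟨by omega, by omega, ?_⟩
      rcases hg' with rfl | rfl
      · simp
      · rw [jacobiSym.mod_right _ hodd]; norm_num [show (r + 24 * k) % 8 = 1 by omega]
    · rintro ⟨hr8, -, rfl⟩
      refine ⟨by omega, by grind, ?_⟩
      rw [jacobiSym.mod_right _ hodd]; norm_num [show (r + 24 * k) % 8 = 3 by omega]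
  rw [hkp] at hJ hmn
  rw [← mul_assoc] at hmn
  refine ⟨r + 24 * k, g * A.gcd (s * n) * p, by omega, ?_, hmn, ?_⟩
  · have := hp.pos
    have := Nat.gcd_pos_of_pos_left (s * n) hodd.pos
    have := Nat.pos_of_dvd_of_pos hg two_pos
    positivity
  · exact isSquare_neg_of_jacobiSym hp hp3 (by omega) hg hdvd hJ

lemma exists_isSquare_neg (n : ℕ) (h : n % 4 = 2 ∨ n % 8 = 1 ∨ n % 4 = 3) :
    ∃ d m : ℕ, d % 3 = 2 ∧ 0 < m ∧ m + 3 = d * n ∧ IsSquare ((-d : ℤ) : ZMod m) := by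
  -- The class of `d` modulo `24` makes `-3` a nonresidue modulo `d`, and makes `J(g | d)` and the
  -- reciprocity sign compensate for it in `J(-d | m)`.
  rcases h with h | h | h
  · exact exists_isSquare_neg_of_mul_add_three_eq (r := 17) (g := 1) (A := 17 * n - 3) (s := 24)
      (by omega) (by omega) rfl (by decide) rfl (.inl ⟨rfl, by omega⟩)
  · exact exists_isSquare_neg_of_mul_add_three_eq (r := 17) (g := 2) (A := (17 * n - 3) / 2)
      (s := 12) (by omega) (by omega) rfl (by decide) rfl (.inl ⟨rfl, by omega⟩)
  · exact exists_isSquare_neg_of_mul_add_three_eq (r := 11) (g := 2) (A := (11 * n - 3) / 2)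
      (s := 12) (by omega) (by omega) rfl (by decide) rfl
      (.inr ⟨rfl, Nat.odd_iff.2 (by omega), rfl⟩)

end Residues

lemma exists_eq_ternary_of_mul_eq_sq_add {n d m : ℤ} (hd : 0 < d) (hd3 : d % 3 = 2) (hm : 0 < m)
    (hmn : m + 3 = d * n) {t a : ℤ} (ha : a * m = t ^ 2 + d) :
    ∃ x z w : ℤ, n = x ^ 2 + 2 * (z ^ 2 + z * w + w ^ 2) := by
  have ha0 : 0 < a := pos_of_mul_pos_left (ha ▸ by positivity) hm.le
  set M : Matrix (Fin 3) (Fin 3) ℤ := !![a, t, 1; t, m, 0; 1, 0, n]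
  have hsymm : M.IsSymm := .ext fun i j ↦ by fin_cases i, j <;> rfl
  have hminor : M 0 0 * M 1 1 - M 1 0 * M 0 1 = d := by
    change a * m - t * t = d
    linear_combination ha
  have hdet : M.det = 3 := by
    rw [det_fin_three]
    simp only [M, of_apply, cons_val', cons_val_zero, cons_val_one, cons_val]
    linear_combination n * ha - hmn
  have hadj : M.adjugate 2 2 = d := by
    rw [adjugate_fin_three_of]
    change a * m - t * t = d
    linear_combination ha
  have hpos : M.PosDef :=
    posDef_fin_three_of_minors_pos hsymm ha0 (hminor ▸ hd) (by rw [hdet]; exact three_pos)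
  exact exists_eq_ternary_of_det_eq_three hpos hdet hd3 (hadj ▸ formRepresents_diag M.adjugate 2)
    (formRepresents_diag M 2)

theorem exists_eq_ternary_of_mod {n : ℕ} (h : n % 4 = 2 ∨ n % 8 = 1 ∨ n % 4 = 3) :
    ∃ x z w : ℤ, (n : ℤ) = x ^ 2 + 2 * (z ^ 2 + z * w + w ^ 2) := by
  obtain ⟨d, m, hd, hm, hmn, t, ht⟩ := exists_isSquare_neg n h
  obtain ⟨s, rfl⟩ := ZMod.intCast_surjective t
  obtain ⟨a, ha⟩ : (m : ℤ) ∣ s ^ 2 + d := by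
    rw [← ZMod.intCast_zmod_eq_zero_iff_dvd]
    push_cast at ht ⊢
    linear_combination -ht
  exact exists_eq_ternary_of_mul_eq_sq_add (d := d) (m := m) (by omega) (by omega) (by omega)
    (by exact_mod_cast hmn) (by rw [ha, mul_comm])

lemma exists_eq_quaternary_of_le_five {b n : ℕ} (hb : 1 ≤ b) (hb5 : b ≤ 5) :
    ∃ x y z w : ℤ, (n : ℤ) = x ^ 2 + b * y ^ 2 + 2 * (z ^ 2 + z * w + w ^ 2) := by
  induction n using Nat.strong_induction_on with
  | _ n ih =>
  have of_sub (y k : ℕ) (hk : n = k + b * y ^ 2) (hmod : k % 4 = 2 ∨ k % 8 = 1 ∨ k % 4 = 3) :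
      ∃ x y z w : ℤ, (n : ℤ) = x ^ 2 + b * y ^ 2 + 2 * (z ^ 2 + z * w + w ^ 2) := by
    obtain ⟨x, z, w, h⟩ := exists_eq_ternary_of_mod hmod
    refine ⟨x, y, z, w, ?_⟩
    rw [hk]
    push_cast
    linear_combination h
  obtain h4 | h5 | h : n % 4 = 0 ∨ n % 8 = 5 ∨ (n % 4 = 2 ∨ n % 8 = 1 ∨ n % 4 = 3) := by omega
  · obtain ⟨k, rfl⟩ := Nat.dvd_of_mod_eq_zero h4
    obtain rfl | hk := k.eq_zero_or_pos
    · exact ⟨0, 0, 0, 0, by simp⟩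
    obtain ⟨x, y, z, w, h⟩ := ih k (by omega)
    refine ⟨2 * x, 2 * y, 2 * z, 2 * w, ?_⟩
    push_cast
    linear_combination 4 * h
  · interval_cases b
    · exact of_sub 2 (n - 4) (by omega) (by omega)
    · exact of_sub 1 (n - 2) (by omega) (by omega)
    · exact of_sub 1 (n - 3) (by omega) (by omega)
    · exact of_sub 1 (n - 4) (by omega) (by omega)
    · obtain rfl | rfl | h20 : n = 5 ∨ n = 13 ∨ 20 ≤ n := by omega
      · exact ⟨0, 1, 0, 0, by norm_num⟩
      · exact ⟨0, 1, 2, 0, by norm_num⟩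
      · exact of_sub 2 (n - 20) (by omega) (by omega)
  · exact of_sub 0 n (by simp) h

lemma sq_add_mul_add_sq_nonneg (z w : ℤ) : 0 ≤ z ^ 2 + z * w + w ^ 2 := by
  nlinarith [sq_nonneg (2 * z + w), sq_nonneg w]

lemma eq_zero_of_mul_sq_lt {b : ℕ} {y : ℤ} (h : b * y ^ 2 < b) : y = 0 := by
  by_contra hy
  have hsq : 0 < y ^ 2 := by positivity
  nlinarith

lemma ternary_emod_eight_ne_five (x z w : ℤ) :
    (x ^ 2 + 2 * (z ^ 2 + z * w + w ^ 2)) % 8 ≠ 5 := by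
  intro h
  have hzmod : ∀ x z w : ZMod 8, x ^ 2 + 2 * (z ^ 2 + z * w + w ^ 2) ≠ 5 := by decide
  refine hzmod x z w ?_
  exact_mod_cast (ZMod.intCast_eq_intCast_iff' _ 5 8).2 h

lemma le_one_of_eq_one {a b : ℕ} (hab : a ≤ b) {x y z w : ℤ}
    (h : 1 = a * x ^ 2 + b * y ^ 2 + 2 * (z ^ 2 + z * w + w ^ 2)) : a ≤ 1 := by
  by_contra! ha
  have hnonneg := sq_add_mul_add_sq_nonneg z w
  have hax : 0 ≤ (a : ℤ) * x ^ 2 := by positivity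
  have hby : 0 ≤ (b : ℤ) * y ^ 2 := by positivity
  obtain rfl : x = 0 := eq_zero_of_mul_sq_lt (b := a) (by linarith)
  obtain rfl : y = 0 := eq_zero_of_mul_sq_lt (b := b) (by linarith)
  omega

lemma le_five_of_eq_five {b : ℕ} {x y z w : ℤ}
    (h : 5 = x ^ 2 + b * y ^ 2 + 2 * (z ^ 2 + z * w + w ^ 2)) : b ≤ 5 := by
  by_contra! hb
  have hnonneg := sq_add_mul_add_sq_nonneg z w
  obtain rfl : y = 0 := eq_zero_of_mul_sq_lt (b := b) (by linarith [sq_nonneg x])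
  refine ternary_emod_eight_ne_five x z w ?_
  rw [show x ^ 2 + 2 * (z ^ 2 + z * w + w ^ 2) = 5 by linear_combination -h]
  rfl

theorem stmt_9 (a b : ℕ) (ha : 0 < a) (hb : 0 < b) (hab : a ≤ b) :
    (∀ n : ℕ, ∃ x y z w : ℤ,
      (n : ℤ) = a * x ^ 2 + b * y ^ 2 + 2 * (z ^ 2 + z * w + w ^ 2)) ↔
    (a = 1 ∧ b ∈ ({1, 2, 3, 4, 5} : Set ℕ)) := by
  constructor
  · intro h
    obtain ⟨x, y, z, w, h1⟩ := h 1
    obtain rfl : a = 1 := le_antisymm (le_one_of_eq_one hab (by exact_mod_cast h1)) ha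
    obtain ⟨x', y', z', w', h5⟩ := h 5
    have hb5 : b ≤ 5 := le_five_of_eq_five (by simpa using h5)
    exact ⟨rfl, by interval_cases b <;> simp⟩
  · rintro ⟨rfl, hmem⟩ n
    have hb5 : b ≤ 5 := by rcases hmem with rfl | rfl | rfl | rfl | rfl <;> decide
    simpa using exists_eq_quaternary_of_le_five hb hb5
end
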